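/- arXiv:2412.03429 — 3 statements merged into one kernel-verified Lean document; each statement's English description precedes it below -/
import Mathlib

section
/- (Uniqueness of the coherent combined forecast.) For every base-forecast vector ŷ : Fin m → ℝ, the vector ỹ := (M * Ωᵀ).mulVec ŷ is the strict minimizer of the constrained least-squares problem: for every y : Fin n → ℝ with C.mulVec y = 0 and y ≠ ỹ, one has (ŷ - K.mulVec ỹ) ⬝ᵥ W⁻¹.mulVec (ŷ - K.mulVec ỹ) < (ŷ - K.mulVec y) ⬝ᵥ W⁻¹.mulVec (ŷ - K.mulVec y). -/
open Matrix

/-!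
The constrained estimate satisfies the Lagrange condition: the gradient `Kᴴ P (b - K x)` of the
residual sum of squares lies in the range of `Cᴴ`, hence is orthogonal to `ker C`. Along a feasible
direction `d` the cost is therefore exactly its value at the estimate plus `dᴴ (Kᴴ P K) d`, which is
positive for `d ≠ 0`. The Lagrange condition itself comes from the normal equations, because the
oblique projection onto `ker C` along the range of `(Kᴴ P K)⁻¹ Cᴴ` changes the unconstrained
estimate by an element of that range, which `Kᴴ P K` maps into the range of `Cᴴ`.
-/

section ObliqueProjection

variable {R n u : Type*} [CommRing R] [Fintype n] [DecidableEq n] [Fintype u] [DecidableEq u]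

/-- The matrix of the projection onto the kernel of `C` along the range of `G`; it is the intended
object when `C * G` is invertible. The matrix `M` of the forecast problem is
`kerProjAlong C (W_c * Cᵀ)`. -/
noncomputable def kerProjAlong (C : Matrix u n R) (G : Matrix n u R) : Matrix n n R :=
  1 - G * (C * G)⁻¹ * C

theorem mul_kerProjAlong {C : Matrix u n R} {G : Matrix n u R} (h : IsUnit (C * G)) :
    C * kerProjAlong C G = 0 := by
  have hCG : C * G * (C * G)⁻¹ = 1 := mul_nonsing_inv _ ((isUnit_iff_isUnit_det _).1 h)
  rw [kerProjAlong, Matrix.mul_sub, Matrix.mul_one, ← Matrix.mul_assoc, ← Matrix.mul_assoc, hCG,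
    Matrix.one_mul, sub_self]

theorem mul_kerProjAlong_inv_mul {A : Matrix n n R} (hA : IsUnit A) (C : Matrix u n R)
    (B : Matrix n u R) :
    A * kerProjAlong C (A⁻¹ * B) = A - B * ((C * (A⁻¹ * B))⁻¹ * C) := by
  rw [kerProjAlong, Matrix.mul_sub, Matrix.mul_one, Matrix.mul_assoc, Matrix.mul_assoc,
    mul_nonsing_inv_cancel_left _ _ ((isUnit_iff_isUnit_det _).1 hA)]

end ObliqueProjection

section WeightedRSS

variable {R m n u : Type*} [CommRing R] [StarRing R] [Fintype m] [Fintype n] [Fintype u]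

theorem star_sub_dotProduct_mulVec_sub_of_orthogonal {P : Matrix m m R} (hP : P.IsHermitian)
    {v w : m → R} (h : star w ⬝ᵥ P *ᵥ v = 0) :
    star (v - w) ⬝ᵥ P *ᵥ (v - w) = star v ⬝ᵥ P *ᵥ v + star w ⬝ᵥ P *ᵥ w := by
  have h_symm : star v ⬝ᵥ P *ᵥ w = 0 := by
    rw [dotProduct_mulVec, ← hP.eq, ← star_mulVec, star_dotProduct, h, star_zero]
  rw [star_sub, mulVec_sub, sub_dotProduct, dotProduct_sub, dotProduct_sub, h, h_symm, sub_zero,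
    zero_sub, sub_neg_eq_add]

theorem star_mulVec_dotProduct_mulVec_mulVec (P : Matrix m m R) (K : Matrix m n R) (d : n → R) :
    star (K *ᵥ d) ⬝ᵥ P *ᵥ K *ᵥ d = star d ⬝ᵥ (Kᴴ * P * K) *ᵥ d := by
  rw [star_mulVec, ← dotProduct_mulVec, mulVec_mulVec, mulVec_mulVec]

/-- The residual sum of squares of the linear model `b ≈ K x`, with weight matrix `P`. The weight
of the forecast problem is `P = W⁻¹`. -/
def weightedRSS (P : Matrix m m R) (K : Matrix m n R) (b : m → R) (x : n → R) : R :=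
  star (b - K *ᵥ x) ⬝ᵥ P *ᵥ (b - K *ᵥ x)

theorem weightedRSS_eq_add_of_orthogonal {P : Matrix m m R} (hP : P.IsHermitian)
    {K : Matrix m n R} {b : m → R} {x y : n → R}
    (h : star (y - x) ⬝ᵥ Kᴴ *ᵥ P *ᵥ (b - K *ᵥ x) = 0) :
    weightedRSS P K b y =
      weightedRSS P K b x + star (y - x) ⬝ᵥ (Kᴴ * P * K) *ᵥ (y - x) := by
  have residual_eq : b - K *ᵥ y = b - K *ᵥ x - K *ᵥ (y - x) := by
    rw [mulVec_sub, sub_sub_sub_cancel_right]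
  have cross : star (K *ᵥ (y - x)) ⬝ᵥ P *ᵥ (b - K *ᵥ x) = 0 := by
    rw [star_mulVec, ← dotProduct_mulVec, h]
  rw [weightedRSS, residual_eq, star_sub_dotProduct_mulVec_sub_of_orthogonal hP cross,
    star_mulVec_dotProduct_mulVec_mulVec, weightedRSS]

theorem star_dotProduct_conjTranspose_mulVec_eq_zero {C : Matrix u n R} {d : n → R}
    (hd : C *ᵥ d = 0) (l : u → R) : star d ⬝ᵥ Cᴴ *ᵥ l = 0 := by
  rw [dotProduct_mulVec, ← star_mulVec, hd, star_zero, zero_dotProduct]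

theorem weightedRSS_lt_of_lagrange [PartialOrder R] [IsOrderedAddMonoid R]
    {P : Matrix m m R} (hP : P.IsHermitian) {K : Matrix m n R} (hK : (Kᴴ * P * K).PosDef)
    {C : Matrix u n R} {b : m → R} {x y : n → R} {l : u → R}
    (hx : Kᴴ *ᵥ P *ᵥ (b - K *ᵥ x) = Cᴴ *ᵥ l) (hC : C *ᵥ y = C *ᵥ x) (hne : y ≠ x) :
    weightedRSS P K b x < weightedRSS P K b y := by
  have feasible : C *ᵥ (y - x) = 0 := by rw [mulVec_sub, hC, sub_self]
  have orthogonal : star (y - x) ⬝ᵥ Kᴴ *ᵥ P *ᵥ (b - K *ᵥ x) = 0 := by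
    rw [hx, star_dotProduct_conjTranspose_mulVec_eq_zero feasible]
  rw [weightedRSS_eq_add_of_orthogonal hP orthogonal]
  exact lt_add_of_pos_right _ (hK.dotProduct_mulVec_pos (sub_ne_zero.2 hne))

end WeightedRSS

section GeneralizedLeastSquares

variable {R m n u : Type*} [CommRing R] [StarRing R] [Fintype m] [Fintype n] [DecidableEq n]
  [Fintype u] [DecidableEq u]

/-- The weights `Ω` of generalized least squares: for a Hermitian weight matrix `P` with `Kᴴ P K`
invertible, `Ωᴴ b` solves the normal equations of the model `b ≈ K x`. -/
noncomputable def glsWeights (P : Matrix m m R) (K : Matrix m n R) : Matrix m n R :=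
  P * K * (Kᴴ * P * K)⁻¹

theorem gram_mul_conjTranspose_glsWeights {P : Matrix m m R} (hP : P.IsHermitian)
    {K : Matrix m n R} (hA : IsUnit (Kᴴ * P * K)) :
    Kᴴ * P * K * (glsWeights P K)ᴴ = Kᴴ * P := by
  have gram_hermitian : (Kᴴ * P * K)ᴴ = Kᴴ * P * K := isHermitian_conjTranspose_mul_mul K hP
  rw [glsWeights, conjTranspose_mul, conjTranspose_nonsing_inv, gram_hermitian, conjTranspose_mul,
    hP.eq, mul_nonsing_inv_cancel_left _ _ ((isUnit_iff_isUnit_det _).1 hA)]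

/-- The estimate of `x` in the model `b ≈ K x` under the constraint `C x = 0`: the unconstrained
estimate, projected onto `ker C` orthogonally for the form given by `Kᴴ P K`. -/
noncomputable def constrainedGLS (P : Matrix m m R) (K : Matrix m n R) (C : Matrix u n R)
    (b : m → R) : n → R :=
  (kerProjAlong C ((Kᴴ * P * K)⁻¹ * Cᴴ) * (glsWeights P K)ᴴ) *ᵥ b

theorem mulVec_constrainedGLS {P : Matrix m m R} {K : Matrix m n R} {C : Matrix u n R}
    (hC : IsUnit (C * (Kᴴ * P * K)⁻¹ * Cᴴ)) (b : m → R) :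
    C *ᵥ constrainedGLS P K C b = 0 := by
  rw [Matrix.mul_assoc] at hC
  rw [constrainedGLS, mulVec_mulVec, ← Matrix.mul_assoc, mul_kerProjAlong hC, Matrix.zero_mul,
    zero_mulVec]

theorem exists_lagrange_multiplier_constrainedGLS {P : Matrix m m R} (hP : P.IsHermitian)
    {K : Matrix m n R} (hA : IsUnit (Kᴴ * P * K)) (C : Matrix u n R) (b : m → R) :
    ∃ l : u → R, Kᴴ *ᵥ P *ᵥ (b - K *ᵥ constrainedGLS P K C b) = Cᴴ *ᵥ l := by
  set A := Kᴴ * P * K with hA_def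
  set Ω := glsWeights P K with hΩ_def
  let L := (C * (A⁻¹ * Cᴴ))⁻¹ * C * Ωᴴ
  have gram_mul : A * (kerProjAlong C (A⁻¹ * Cᴴ) * Ωᴴ) = Kᴴ * P - Cᴴ * L := by
    rw [← Matrix.mul_assoc, mul_kerProjAlong_inv_mul hA, Matrix.sub_mul, hA_def, hΩ_def,
      gram_mul_conjTranspose_glsWeights hP hA, Matrix.mul_assoc Cᴴ]
  refine ⟨L *ᵥ b, ?_⟩
  calc Kᴴ *ᵥ P *ᵥ (b - K *ᵥ constrainedGLS P K C b)
      = (Kᴴ * P) *ᵥ b - (A * (kerProjAlong C (A⁻¹ * Cᴴ) * Ωᴴ)) *ᵥ b := by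
        rw [mulVec_sub, mulVec_sub, mulVec_mulVec, mulVec_mulVec, mulVec_mulVec,
          constrainedGLS, mulVec_mulVec, ← Matrix.mul_assoc]
    _ = Cᴴ *ᵥ L *ᵥ b := by rw [gram_mul, sub_mulVec, sub_sub_cancel, mulVec_mulVec]

end GeneralizedLeastSquares

theorem occ_unique_general {𝕜 m n u : Type*} [Field 𝕜] [StarRing 𝕜] [PartialOrder 𝕜]
    [IsOrderedAddMonoid 𝕜] [Fintype m] [Fintype n] [DecidableEq n] [Fintype u] [DecidableEq u]
    {P : Matrix m m 𝕜} (hP : P.IsHermitian)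
    {K : Matrix m n 𝕜} (hK : (Kᴴ * P * K).PosDef)
    {C : Matrix u n 𝕜} (hC : IsUnit (C * (Kᴴ * P * K)⁻¹ * Cᴴ))
    {b : m → 𝕜} {y : n → 𝕜} (hy : C *ᵥ y = 0) (hne : y ≠ constrainedGLS P K C b) :
    weightedRSS P K b (constrainedGLS P K C b) < weightedRSS P K b y := by
  obtain ⟨l, hl⟩ := exists_lagrange_multiplier_constrainedGLS hP hK.isUnit C b
  exact weightedRSS_lt_of_lagrange hP hK hl (hy.trans (mulVec_constrainedGLS hC b).symm) hne

/-- Uniqueness: ỹ = M Ωᵀ ŷ is the strict minimizer of the constrained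
least-squares problem. -/
theorem occ_unique {m n u : ℕ}
    (W : Matrix (Fin m) (Fin m) ℝ) (hW : W.PosDef)
    (K : Matrix (Fin m) (Fin n) ℝ) (hK : (Kᵀ * W⁻¹ * K).PosDef)
    (C : Matrix (Fin u) (Fin n) ℝ)
    (hC : (C * (Kᵀ * W⁻¹ * K)⁻¹ * Cᵀ).PosDef)
    (yhat : Fin m → ℝ) :
    let W_c : Matrix (Fin n) (Fin n) ℝ := (Kᵀ * W⁻¹ * K)⁻¹
    let Ω : Matrix (Fin m) (Fin n) ℝ := W⁻¹ * K * W_c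
    let M : Matrix (Fin n) (Fin n) ℝ := 1 - W_c * Cᵀ * (C * W_c * Cᵀ)⁻¹ * C
    let ytilde : Fin n → ℝ := (M * Ωᵀ).mulVec yhat
    ∀ y : Fin n → ℝ, C.mulVec y = 0 → y ≠ ytilde →
      (yhat - K.mulVec ytilde) ⬝ᵥ W⁻¹.mulVec (yhat - K.mulVec ytilde) <
        (yhat - K.mulVec y) ⬝ᵥ W⁻¹.mulVec (yhat - K.mulVec y) := by
  simpa only [constrainedGLS, weightedRSS, kerProjAlong, glsWeights,
    conjTranspose_eq_transpose_of_trivial, star_trivial, Matrix.mul_assoc] using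
    fun y => occ_unique_general hW.inv.isHermitian hK hC.isUnit (b := yhat) (y := y)
end

section
/- (Corollary 1, eq. (12): chain of covariance inequalities.) Let q : ℕ, E : Matrix (Fin m) (Fin q) ℝ and L : Matrix (Fin q) (Fin n) ℝ satisfy Kᵀ * E = Lᵀ. Then, with W̃_c := M * W_c, both L * W_c * Lᵀ - L * W̃_c * Lᵀ and Eᵀ * W * E - L * W̃_c * Lᵀ are positive semidefinite; that is, L * W̃_c * Lᵀ ⪯ L * W_c * Lᵀ ⪯ Eᵀ * W * E. -/
open Matrix

/-!
Both inequalities are congruences of inequalities between covariance matrices. Imposing the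
constraints lowers the covariance `V` by the positive semidefinite matrix
`V * Cᴴ * (C * V * Cᴴ)⁻¹ * (V * Cᴴ)ᴴ`. For the Gauss–Markov bound, consider the block matrix with
rows `(W, K)` and `(Kᴴ, Kᴴ * W⁻¹ * K)`: the Schur complement of its first block vanishes, so it is
positive semidefinite, and the Schur complement of its second block is
`W - K * (Kᴴ * W⁻¹ * K)⁻¹ * Kᴴ`. Congruence by `E`, with `Eᴴ * K = L`, gives the bound.
-/

section Definitions

variable {m n u R : Type*} [CommRing R] [StarRing R] [Fintype n] [DecidableEq n]

/-- The covariance `W_c` of the generalized least squares estimator with design matrix `K` and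
noise covariance `W`. It is meaningful only when `W` and `Kᴴ * W⁻¹ * K` are invertible. -/
noncomputable def glsCovariance [Fintype m] [DecidableEq m] (W : Matrix m m R)
    (K : Matrix m n R) : Matrix n n R :=
  (Kᴴ * W⁻¹ * K)⁻¹

/-- The projection `M` onto the kernel of the constraints `C` along the range of `V * Cᴴ`, which
turns an estimate with covariance `V` into the best constrained one. It is meaningful only when
`C * V * Cᴴ` is invertible. -/
noncomputable def constraintProjection [Fintype u] [DecidableEq u] (V : Matrix n n R)
    (C : Matrix u n R) : Matrix n n R :=
  1 - V * Cᴴ * (C * V * Cᴴ)⁻¹ * C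

end Definitions

section Constraint

variable {n u R : Type*} [CommRing R] [PartialOrder R] [StarRing R]
  [Fintype n] [DecidableEq n] [Fintype u] [DecidableEq u]

theorem posSemidef_sub_constraintProjection_mul {V : Matrix n n R} {C : Matrix u n R}
    (hV : V.IsHermitian) (hC : (C * V * Cᴴ).PosSemidef) :
    (V - constraintProjection V C * V).PosSemidef := by
  have reduction : V - constraintProjection V C * V =
      V * Cᴴ * (C * V * Cᴴ)⁻¹ * (V * Cᴴ)ᴴ := by
    simp only [constraintProjection, Matrix.sub_mul, Matrix.one_mul, sub_sub_cancel,
      conjTranspose_mul, conjTranspose_conjTranspose, hV.eq, Matrix.mul_assoc]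
  rw [reduction]
  exact hC.inv.mul_mul_conjTranspose_same (V * Cᴴ)

end Constraint

section GaussMarkov

variable {m n q u 𝕜 : Type*} [Field 𝕜] [PartialOrder 𝕜] [StarRing 𝕜] [StarOrderedRing 𝕜]
  [Fintype m] [DecidableEq m] {W : Matrix m m 𝕜}

theorem posSemidef_fromBlocks_conjTranspose_mul_inv_mul [Finite n] (hW : W.PosDef)
    (K : Matrix m n 𝕜) : (fromBlocks W K Kᴴ (Kᴴ * W⁻¹ * K)).PosSemidef := by
  have := hW.isUnit.invertible
  rw [hW.fromBlocks₁₁, sub_self]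
  exact .zero

variable [Fintype n] [DecidableEq n] [Finite q] {K : Matrix m n 𝕜}

theorem posSemidef_sub_mul_glsCovariance_mul_conjTranspose (hW : W.PosDef)
    (hK : (Kᴴ * W⁻¹ * K).PosDef) : (W - K * glsCovariance W K * Kᴴ).PosSemidef := by
  have := hK.isUnit.invertible
  exact (hK.fromBlocks₂₂ W K).mp (posSemidef_fromBlocks_conjTranspose_mul_inv_mul hW K)

theorem gauss_markov (hW : W.PosDef) (hK : (Kᴴ * W⁻¹ * K).PosDef)
    {E : Matrix m q 𝕜} {L : Matrix q n 𝕜} (hEL : Kᴴ * E = Lᴴ) :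
    (Eᴴ * W * E - L * glsCovariance W K * Lᴴ).PosSemidef := by
  have hL : Eᴴ * K = L := by
    simpa only [conjTranspose_mul, conjTranspose_conjTranspose] using congrArg conjTranspose hEL
  have fitted : Eᴴ * (K * glsCovariance W K * Kᴴ) * E = L * glsCovariance W K * Lᴴ := by
    rw [← hEL, ← hL]
    simp only [Matrix.mul_assoc]
  rw [← fitted, ← Matrix.sub_mul, ← Matrix.mul_sub]
  exact (posSemidef_sub_mul_glsCovariance_mul_conjTranspose hW hK).conjTranspose_mul_mul_same E

theorem occ_covariance_chain_general [Fintype u] [DecidableEq u]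
    (hW : W.PosDef) (hK : (Kᴴ * W⁻¹ * K).PosDef)
    {C : Matrix u n 𝕜} (hC : (C * glsCovariance W K * Cᴴ).PosDef)
    {E : Matrix m q 𝕜} {L : Matrix q n 𝕜} (hEL : Kᴴ * E = Lᴴ) :
    (L * glsCovariance W K * Lᴴ -
      L * (constraintProjection (glsCovariance W K) C * glsCovariance W K) * Lᴴ).PosSemidef ∧
      (Eᴴ * W * E - L * glsCovariance W K * Lᴴ).PosSemidef := by
  refine ⟨?_, gauss_markov hW hK hEL⟩
  rw [← Matrix.sub_mul, ← Matrix.mul_sub]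
  exact (posSemidef_sub_constraintProjection_mul hK.inv.isHermitian
    hC.posSemidef).mul_mul_conjTranspose_same L

end GaussMarkov

/-- Corollary 1, eq. (12): chain of covariance inequalities
L W̃_c Lᵀ ⪯ L W_c Lᵀ ⪯ Eᵀ W E, where W̃_c = M W_c. -/
theorem occ_covariance_chain {m n u q : ℕ}
    (W : Matrix (Fin m) (Fin m) ℝ) (hW : W.PosDef)
    (K : Matrix (Fin m) (Fin n) ℝ) (hK : (Kᵀ * W⁻¹ * K).PosDef)
    (C : Matrix (Fin u) (Fin n) ℝ)
    (hC : (C * (Kᵀ * W⁻¹ * K)⁻¹ * Cᵀ).PosDef)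
    (E : Matrix (Fin m) (Fin q) ℝ) (L : Matrix (Fin q) (Fin n) ℝ)
    (hEL : Kᵀ * E = Lᵀ) :
    let W_c : Matrix (Fin n) (Fin n) ℝ := (Kᵀ * W⁻¹ * K)⁻¹
    let M : Matrix (Fin n) (Fin n) ℝ := 1 - W_c * Cᵀ * (C * W_c * Cᵀ)⁻¹ * C
    let Wtc : Matrix (Fin n) (Fin n) ℝ := M * W_c
    (L * W_c * Lᵀ - L * Wtc * Lᵀ).PosSemidef ∧
      (Eᵀ * W * E - L * Wtc * Lᵀ).PosSemidef := by
  obtain ⟨constrained, unbiased⟩ := occ_covariance_chain_general hW hK hC hEL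
  exact ⟨constrained, sub_add_sub_cancel (Eᵀ * W * E) _ _ ▸ unbiased.add constrained⟩
end

section
/- (Error representation of the coherent combined forecast.) For every base-forecast vector ŷ : Fin m → ℝ and every coherent target y : Fin n → ℝ with C.mulVec y = 0, the coherent combination error satisfies (M * Ωᵀ).mulVec ŷ - y = (M * Ωᵀ).mulVec (ŷ - K.mulVec y); that is, the error of ỹ := (M * Ωᵀ).mulVec ŷ is the linear image under M * Ωᵀ of the base-forecast error ŷ - K.mulVec y. -/
open Matrix

section

variable {m n u R : Type*} [Fintype m] [Fintype n] [DecidableEq n]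

theorem one_sub_mul_mulVec_of_mulVec_eq_zero [Fintype u] [Ring R] {C : Matrix u n R} {y : n → R}
    (hy : C *ᵥ y = 0) (G : Matrix n u R) : (1 - G * C) *ᵥ y = y := by
  rw [sub_mulVec, one_mulVec, ← mulVec_mulVec, hy, mulVec_zero, sub_zero]

theorem transpose_mul_mul_nonsing_inv_mul_self [CommRing R] {P : Matrix m m R} {K : Matrix m n R}
    (hK : IsUnit (Kᵀ * P * K)) : (P * K * (Kᵀ * P * K)⁻¹)ᵀ * K = 1 := by
  have hdet : IsUnit (Kᵀ * P * K).det := (isUnit_iff_isUnit_det _).1 hK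
  have right_inv : Kᵀ * (P * K * (Kᵀ * P * K)⁻¹) = 1 := by
    rw [← Matrix.mul_assoc, ← Matrix.mul_assoc, mul_nonsing_inv _ hdet]
  simpa only [transpose_mul, transpose_transpose, transpose_one] using congrArg transpose right_inv

theorem occ_error_representation_general [Fintype u] [Ring R] {K : Matrix m n R}
    {L : Matrix n m R} (hL : L * K = 1) {C : Matrix u n R} (G : Matrix n u R)
    (yhat : m → R) {y : n → R} (hy : C *ᵥ y = 0) :
    ((1 - G * C) * L) *ᵥ yhat - y = ((1 - G * C) * L) *ᵥ (yhat - K *ᵥ y) := by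
  have reproduces_y : ((1 - G * C) * L) *ᵥ (K *ᵥ y) = y := by
    rw [mulVec_mulVec, Matrix.mul_assoc, hL, Matrix.mul_one,
      one_sub_mul_mulVec_of_mulVec_eq_zero hy]
  rw [mulVec_sub, reproduces_y]

end

/-- Error representation of the coherent combined forecast:
(M Ωᵀ) ŷ - y = (M Ωᵀ) (ŷ - K y) for any coherent target y. -/
theorem occ_error_representation {m n u : ℕ}
    (W : Matrix (Fin m) (Fin m) ℝ) (hW : W.PosDef)
    (K : Matrix (Fin m) (Fin n) ℝ) (hK : (Kᵀ * W⁻¹ * K).PosDef)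
    (C : Matrix (Fin u) (Fin n) ℝ)
    (hC : (C * (Kᵀ * W⁻¹ * K)⁻¹ * Cᵀ).PosDef)
    (yhat : Fin m → ℝ) (y : Fin n → ℝ) (hy : C.mulVec y = 0) :
    let W_c : Matrix (Fin n) (Fin n) ℝ := (Kᵀ * W⁻¹ * K)⁻¹
    let Ω : Matrix (Fin m) (Fin n) ℝ := W⁻¹ * K * W_c
    let M : Matrix (Fin n) (Fin n) ℝ := 1 - W_c * Cᵀ * (C * W_c * Cᵀ)⁻¹ * C
    (M * Ωᵀ).mulVec yhat - y = (M * Ωᵀ).mulVec (yhat - K.mulVec y) := by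
  exact occ_error_representation_general
    (transpose_mul_mul_nonsing_inv_mul_self hK.isUnit) _ yhat hy
end
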